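/- arXiv:2207.06993 — 5 statements merged into one kernel-verified Lean document; each statement's English description precedes it below -/
import Mathlib

section
/- For any relational frame (X,◁): (1) the c_◁-fixpoints ordered by inclusion form a complete lattice 𝔏(X,◁), in which the meet of a family of fixpoints is its intersection and the join of a family is c_◁ of its union; (2) ¬_◁ is a precomplementation on 𝔏(X,◁); and (3) if ◁ is reflexive, then ¬_◁ is a protocomplementation on 𝔏(X,◁). -/
/-- The closure operation `c_◁` on subsets of a relational frame `(X, ◁)`. -/
def cl {X : Type*} (lt : X → X → Prop) (A : Set X) : Set X :=
  {x | ∀ x', lt x' x → ∃ x'', lt x' x'' ∧ x'' ∈ A}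

/-- The negation operation `¬_◁` on subsets of a relational frame `(X, ◁)`. -/
def negSet {X : Type*} (lt : X → X → Prop) (A : Set X) : Set X :=
  {x | ∀ y, lt y x → y ∉ A}

/-! Let `R` be the converse of `◁`: the set `R.image A` consists of the points with a successor
in `A`, and `R.core B` of the points all of whose predecessors lie in `B`. Then
`c_◁ A = R.core (R.image A)`, and since `R.image` is left adjoint to `R.core`, this is a closure
operator, whose closed sets form a complete lattice. Moreover `¬_◁ A = R.core Aᶜ` lies in the range
of the right adjoint and is therefore closed. If `◁` is reflexive, then `R.core B ⊆ B`, so that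
`¬_◁ A` is disjoint from `A`; for `A` the whole space this says that `c_◁ ∅ = ¬_◁ A` is empty. -/

section RelationalFrame

variable {X : Type*} (lt : X → X → Prop)

/-- The converse of `◁` as a `SetRel`, relating each point to its predecessors; its `SetRel.image`
and `SetRel.core` are the two adjoint factors of `c_◁`. -/
def predecessorRel : SetRel X X :=
  {p | lt p.2 p.1}

theorem cl_eq_core_image (A : Set X) :
    cl lt A = (predecessorRel lt).core ((predecessorRel lt).image A) := by
  ext x
  simp [cl, predecessorRel, SetRel.core, SetRel.image, and_comm]

theorem negSet_eq_core_compl (A : Set X) : negSet lt A = (predecessorRel lt).core Aᶜ :=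
  rfl

/-- The operation `c_◁` as a closure operator on `Set X`, obtained from the Galois connection
between image and core; its closed sets are the `c_◁`-fixpoints. -/
def clOperator : ClosureOperator (Set X) :=
  (SetRel.image_core_gc (R := predecessorRel lt)).closureOperator

theorem clOperator_apply (A : Set X) : clOperator lt A = cl lt A :=
  (cl_eq_core_image lt A).symm

theorem isClosed_clOperator_iff {A : Set X} : (clOperator lt).IsClosed A ↔ cl lt A = A := by
  rw [← clOperator_apply]
  exact (clOperator lt).isClosed_iff

theorem subset_cl (A : Set X) : A ⊆ cl lt A :=
  clOperator_apply lt A ▸ (clOperator lt).le_closure A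

theorem cl_cl (A : Set X) : cl lt (cl lt A) = cl lt A := by
  simpa only [clOperator_apply] using (clOperator lt).idempotent A

theorem cl_subset_of_subset {A B : Set X} (hB : cl lt B = B) (hAB : A ⊆ B) : cl lt A ⊆ B :=
  clOperator_apply lt A ▸ ClosureOperator.closure_min hAB ((isClosed_clOperator_iff lt).2 hB)

theorem cl_sInter {S : Set (Set X)} (hS : ∀ A ∈ S, cl lt A = A) : cl lt (⋂₀ S) = ⋂₀ S := by
  simp only [← isClosed_clOperator_iff] at hS ⊢
  exact ClosureOperator.sInf_isClosed hS

theorem cl_negSet (A : Set X) : cl lt (negSet lt A) = negSet lt A := by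
  rw [cl_eq_core_image, negSet_eq_core_compl]
  exact SetRel.image_core_gc.u_l_u_eq_u Aᶜ

theorem negSet_antitone : Antitone (negSet lt) := fun A B hAB ↦ by
  simpa only [negSet_eq_core_compl] using SetRel.core_mono (Set.compl_subset_compl.2 hAB)

theorem negSet_univ : negSet lt Set.univ = cl lt ∅ := by
  rw [negSet_eq_core_compl, cl_eq_core_image, Set.compl_univ, SetRel.image_empty_right]

theorem negSet_empty : negSet lt ∅ = Set.univ := by
  rw [negSet_eq_core_compl, Set.compl_empty, SetRel.core_univ]

theorem negSet_subset_compl [Std.Refl lt] (A : Set X) : negSet lt A ⊆ Aᶜ :=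
  fun x hx ↦ hx x (refl x)

theorem inter_negSet_eq_empty [Std.Refl lt] (A : Set X) : A ∩ negSet lt A = ∅ :=
  (Set.disjoint_right.2 (negSet_subset_compl lt A)).inter_eq

theorem cl_empty [Std.Refl lt] : cl lt ∅ = ∅ := by
  rw [← negSet_univ, ← Set.univ_inter (negSet lt Set.univ), inter_negSet_eq_empty]

end RelationalFrame

/-- (1) The `c_◁`-fixpoints ordered by inclusion form a complete lattice: every family of
fixpoints has an infimum, its intersection, and a supremum, `c_◁` of its union.
(2) `¬_◁` is a precomplementation on this lattice: it maps fixpoints to fixpoints,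
is antitone, and sends the top fixpoint `univ` to the bottom fixpoint `c_◁(∅)`.
(3) If `◁` is reflexive, `¬_◁` is a protocomplementation: moreover every fixpoint `A`
satisfies `A ∩ ¬_◁A = c_◁(∅)` (the bottom) and `¬_◁` sends the bottom to the top. -/
theorem stmt_1 (X : Type*) [Nonempty X] (lt : X → X → Prop) :
    (∀ S : Set (Set X), (∀ A ∈ S, cl lt A = A) →
      (cl lt (⋂₀ S) = ⋂₀ S ∧ (∀ A ∈ S, ⋂₀ S ⊆ A) ∧
        (∀ B : Set X, cl lt B = B → (∀ A ∈ S, B ⊆ A) → B ⊆ ⋂₀ S)) ∧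
      (cl lt (cl lt (⋃₀ S)) = cl lt (⋃₀ S) ∧ (∀ A ∈ S, A ⊆ cl lt (⋃₀ S)) ∧
        (∀ B : Set X, cl lt B = B → (∀ A ∈ S, A ⊆ B) → cl lt (⋃₀ S) ⊆ B))) ∧
    ((∀ A : Set X, cl lt A = A → cl lt (negSet lt A) = negSet lt A) ∧
      (∀ A B : Set X, cl lt A = A → cl lt B = B → A ⊆ B → negSet lt B ⊆ negSet lt A) ∧
      negSet lt Set.univ = cl lt ∅) ∧
    (Reflexive lt →
      (∀ A : Set X, cl lt A = A → A ∩ negSet lt A = cl lt ∅) ∧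
      negSet lt (cl lt ∅) = Set.univ) := by
  refine ⟨fun S hS ↦ ⟨⟨cl_sInter lt hS, ?_, ?_⟩, cl_cl lt (⋃₀ S), ?_, ?_⟩,
    ⟨fun A _ ↦ cl_negSet lt A, fun A B _ _ hAB ↦ negSet_antitone lt hAB, negSet_univ lt⟩,
    fun hlt ↦ ?_⟩
  · exact fun A hA ↦ Set.sInter_subset_of_mem hA
  · exact fun B _ hB ↦ Set.subset_sInter hB
  · exact fun A hA ↦ (Set.subset_sUnion_of_mem hA).trans (subset_cl lt (⋃₀ S))
  · exact fun B hB hSB ↦ cl_subset_of_subset lt hB (Set.sUnion_subset hSB)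
  · have : Std.Refl lt := ⟨hlt⟩
    rw [cl_empty]
    exact ⟨fun A _ ↦ inter_negSet_eq_empty lt A, negSet_empty lt⟩
end

section
/- Let L be a lattice and P a separating set of pairs of elements of L, with (a,b) ◁ (c,d) defined by c ≰ b. For a ∈ L define f(a) = {(x,y) ∈ P : x ≤ a}. Then: (1) f is a complete embedding of L into 𝔏(P,◁); and (2) if L is complete, then f is an isomorphism from L to 𝔏(P,◁). -/
/-- The relation `◁` on a set `P` of pairs of lattice elements: `(a,b) ◁ (c,d)` iff `c ≰ b`. -/
def ltP {L : Type*} [Lattice L] (P : Set (L × L)) : ↥P → ↥P → Prop :=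
  fun p q => ¬ (q.1.1 ≤ p.1.2)

/-- `P` is a separating set of pairs of elements of `L`. -/
def Separating {L : Type*} [Lattice L] (P : Set (L × L)) : Prop :=
  (∀ a b : L, ¬ a ≤ b → ∃ p ∈ P, p.1 ≤ a ∧ ¬ p.1 ≤ b) ∧
  (∀ (b : L) (p : ↥P), ¬ p.1.1 ≤ b →
    ∃ p' : ↥P, ltP P p' p ∧ ∀ p'' : ↥P, ltP P p' p'' → ¬ p''.1.1 ≤ b)

/-- The map `f(a) = {(x,y) ∈ P : x ≤ a}`. -/
def emb {L : Type*} [Lattice L] (P : Set (L × L)) (a : L) : Set ↥P :=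
  {p | p.1.1 ≤ a}

/-!
Condition (ii) on a separating set says that every `f b` is `c_◁`-closed. Under it, `c_◁` is the
MacNeille closure seen through first coordinates: `(x, y) ∈ c_◁ A` iff `x` lies below every upper
bound of the first coordinates occurring in `A`. Hence `c_◁ A = f a` as soon as these coordinates
have supremum `a`. Condition (i) says that `a` is the supremum of the first coordinates occurring
in `f a`, which gives injectivity and lets joins in `L` be computed by `c_◁`.
-/

open Set

theorem cl_mono {X : Type*} (lt : X → X → Prop) : Monotone (cl lt) := by
  intro A B hAB x hx x' hx'
  obtain ⟨x'', hlt, hA⟩ := hx x' hx'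
  exact ⟨x'', hlt, hAB hA⟩

section Preorder

variable {X L : Type*} [Preorder L] {l r : X → L}

/-- The relation `◁` for a family of pairs `(l x, r x)` of elements of a preorder. Families indexed
by a type replace sets of pairs, so that `f a` is the preimage `l ⁻¹' Iic a`. -/
def PairRel (l r : X → L) (x y : X) : Prop := ¬ l y ≤ r x

/-- The values of `l` are join-dense: every element is the least upper bound of the values of `l`
below it. This is condition (i) of a separating family. -/
def JoinDense (l : X → L) : Prop := ∀ a, IsLUB (l '' (l ⁻¹' Iic a)) a

theorem preimage_lowerBounds_upperBounds_subset_cl_pairRel (A : Set X) :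
    l ⁻¹' lowerBounds (upperBounds (l '' A)) ⊆ cl (PairRel l r) A := by
  intro x hx x' hx'
  have not_upper : r x' ∉ upperBounds (l '' A) := fun hr => hx' (hx hr)
  simpa [mem_upperBounds, PairRel, and_comm] using not_upper

theorem cl_pairRel_eq_preimage_lowerBounds_upperBounds
    (hclosed : ∀ b, cl (PairRel l r) (l ⁻¹' Iic b) ⊆ l ⁻¹' Iic b) (A : Set X) :
    cl (PairRel l r) A = l ⁻¹' lowerBounds (upperBounds (l '' A)) := by
  refine Subset.antisymm (fun x hx b hb => ?_)
    (preimage_lowerBounds_upperBounds_subset_cl_pairRel A)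
  have subset_Iic : A ⊆ l ⁻¹' Iic b := fun y hy => hb (mem_image_of_mem l hy)
  exact hclosed b (cl_mono _ subset_Iic hx)

theorem cl_pairRel_eq_preimage_Iic_of_isLUB
    (hclosed : ∀ b, cl (PairRel l r) (l ⁻¹' Iic b) ⊆ l ⁻¹' Iic b) {A : Set X} {a : L}
    (ha : IsLUB (l '' A) a) : cl (PairRel l r) A = l ⁻¹' Iic a := by
  rw [cl_pairRel_eq_preimage_lowerBounds_upperBounds hclosed, ha.upperBounds_eq, lowerBounds_Ici]

theorem preimage_Iic_eq_biInter_of_isGLB (l : X → L) {S : Set L} {a : L} (ha : IsGLB S a) :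
    l ⁻¹' Iic a = ⋂ s ∈ S, l ⁻¹' Iic s := by
  ext x
  simp only [mem_preimage, mem_Iic, le_isGLB_iff ha, mem_lowerBounds, mem_iInter]

theorem JoinDense.isLUB_image_biUnion (hdense : JoinDense l) {S : Set L} {a : L}
    (ha : IsLUB S a) : IsLUB (l '' ⋃ s ∈ S, l ⁻¹' Iic s) a := by
  rw [biUnion_eq_iUnion, image_iUnion,
    ← isLUB_iUnion_iff_of_isLUB (u := Subtype.val) fun s : S => hdense s, Subtype.range_val]
  exact ha

end Preorder

section PartialOrder

variable {X L : Type*} [PartialOrder L] {l r : X → L}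

theorem JoinDense.injective_preimage_Iic (hdense : JoinDense l) :
    Function.Injective fun a => l ⁻¹' Iic a := by
  intro a b hab
  have lub_a : IsLUB (l '' (l ⁻¹' Iic b)) a := congrArg (l '' ·) hab ▸ hdense a
  exact lub_a.unique (hdense b)

theorem stmt_11_general (hdense : JoinDense l)
    (hclosed : ∀ b, cl (PairRel l r) (l ⁻¹' Iic b) ⊆ l ⁻¹' Iic b) :
    Function.Injective (fun a => l ⁻¹' Iic a) ∧
    (∀ a, cl (PairRel l r) (l ⁻¹' Iic a) = l ⁻¹' Iic a) ∧
    (∀ (S : Set L) (a : L), IsGLB S a → l ⁻¹' Iic a = ⋂ s ∈ S, l ⁻¹' Iic s) ∧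
    (∀ (S : Set L) (a : L), IsLUB S a →
      l ⁻¹' Iic a = cl (PairRel l r) (⋃ s ∈ S, l ⁻¹' Iic s)) ∧
    ((∀ S : Set L, ∃ a, IsLUB S a) →
      ∀ A : Set X, cl (PairRel l r) A = A → ∃ a, l ⁻¹' Iic a = A) := by
  refine ⟨hdense.injective_preimage_Iic,
    fun a => cl_pairRel_eq_preimage_Iic_of_isLUB hclosed (hdense a),
    fun S a => preimage_Iic_eq_biInter_of_isGLB l,
    fun S a ha =>
      (cl_pairRel_eq_preimage_Iic_of_isLUB hclosed (hdense.isLUB_image_biUnion ha)).symm,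
    fun hcomplete A hA => ?_⟩
  obtain ⟨a, ha⟩ := hcomplete (l '' A)
  exact ⟨a, (cl_pairRel_eq_preimage_Iic_of_isLUB hclosed ha).symm.trans hA⟩

end PartialOrder

section Separating

variable {L : Type*} [Lattice L] {P : Set (L × L)}

theorem Separating.joinDense (hsep : Separating P) : JoinDense fun p : P => p.1.1 := by
  refine fun a => ⟨forall_mem_image.2 fun _ hp => hp, fun b hb => ?_⟩
  by_contra hab
  obtain ⟨p, hp, hpa, hpb⟩ := hsep.1 a b hab
  exact hpb (hb ⟨⟨p, hp⟩, hpa, rfl⟩)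

theorem Separating.cl_emb_subset (hsep : Separating P) (b : L) :
    cl (ltP P) (emb P b) ⊆ emb P b := by
  intro p hp
  by_contra hpb
  obtain ⟨p', hp', avoids⟩ := hsep.2 b p hpb
  obtain ⟨q, hq, hqb⟩ := hp p' hp'
  exact avoids q hq hqb

end Separating

/-- (1) `f` is a complete embedding of `L` into the complete lattice `𝔏(P,◁)` of
`c_◁`-fixpoints (where meets of fixpoints are intersections and joins are `c_◁` of unions):
`f` is injective, lands in the fixpoints, and preserves all existing meets and joins.
(2) If `L` is complete (every subset has a least upper bound), then `f` is moreover
surjective onto the fixpoints, hence an isomorphism onto `𝔏(P,◁)`. -/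
theorem stmt_11 {L : Type*} [Lattice L] (P : Set (L × L)) (hsep : Separating P) :
    Function.Injective (emb P) ∧
    (∀ a : L, cl (ltP P) (emb P a) = emb P a) ∧
    (∀ (S : Set L) (a : L), IsGLB S a → emb P a = ⋂ s ∈ S, emb P s) ∧
    (∀ (S : Set L) (a : L), IsLUB S a → emb P a = cl (ltP P) (⋃ s ∈ S, emb P s)) ∧
    ((∀ S : Set L, ∃ a : L, IsLUB S a) →
      ∀ A : Set ↥P, cl (ltP P) A = A → ∃ a : L, emb P a = A) :=
  stmt_11_general hsep.joinDense hsep.cl_emb_subset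
end

section
/- Let L be a bounded lattice, Λ a meet-dense set of elements of L, and ¬ an antitone unary operation on L. Define P = {(a,¬a) : a ∈ L} ∪ {(1,b) : b ∈ Λ}, with (a,b) ◁ (c,d) iff c ≰ b, and F = c_◁({(¬1, ¬¬1)}). Then the map f(a) = {(x,y) ∈ P : x ≤ a} is a complete embedding of (L,¬) into (𝔏(P,◁), ¬_{◁,F}), which is an isomorphism if L is complete. -/
/-- The negation operation `¬_{◁,F}` relative to a distinguished set `F`. -/
def negSetF {X : Type*} (lt : X → X → Prop) (F A : Set X) : Set X :=
  {x | ∀ x', lt x' x → x' ∈ A → ∃ x'', lt x' x'' ∧ x'' ∈ F}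

/-- The set of pairs `P = {(a,¬a) : a ∈ L} ∪ {(1,b) : b ∈ Λ}`. -/
def Pant {L : Type*} [Lattice L] [BoundedOrder L] (neg : L → L) (Λ : Set L) :
    Set (L × L) :=
  {p | (∃ a : L, p = (a, neg a)) ∨ (∃ b ∈ Λ, p = ((⊤ : L), b))}

/-- The distinguished fixpoint `F = c_◁({(¬1, ¬¬1)})`. -/
def Fant {L : Type*} [Lattice L] [BoundedOrder L] (neg : L → L) (Λ : Set L) :
    Set ↥(Pant neg Λ) :=
  cl (ltP (Pant neg Λ)) {p | p.1 = (neg ⊤, neg (neg ⊤))}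

/-!
Let `f = emb P`. If the second coordinates of `P` are meet-dense, then `c_◁(A) = f(a)` whenever `a`
is the join of the first coordinates of `A`, since there are enough second coordinates to detect `a`
from its upper bounds. If the first coordinates of `P` are join-dense, then `a` is in turn the join
of the first coordinates of `f(a)`. Hence the `f(a)` are fixpoints, and the closure of a union of
sets `f(s)` is given by the join of the `s`.

In particular `F = f(¬1)`, so `(x, y) ∈ ¬f(a)` says that every `(c, d) ∈ P` with `c ≤ a` and
`¬1 ≤ d` has `x ≤ d`. The pair `(a, ¬a)` forces `x ≤ ¬a`; conversely antitonicity gives `¬a ≤ d` for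
all these pairs, because a pair `(1, b)` with `b ∈ Λ` is only tested when `a = 1`.
-/

section Density

variable {α : Type*} [Preorder α] {s t : Set α} {a b : α}

/-- Meet-density: every element is the meet of a subset of `s`. The subset may be infinite, and it
may be empty for a top element. -/
def IsMeetDense (s : Set α) : Prop :=
  ∀ a : α, ∃ S : Set α, S ⊆ s ∧ IsGLB S a

/-- Join-density, the order dual of `IsMeetDense`. -/
def IsJoinDense (s : Set α) : Prop :=
  ∀ a : α, ∃ S : Set α, S ⊆ s ∧ IsLUB S a

theorem IsMeetDense.mono (hs : IsMeetDense s) (hst : s ⊆ t) : IsMeetDense t := fun a ↦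
  let ⟨S, hS, ha⟩ := hs a
  ⟨S, hS.trans hst, ha⟩

theorem isJoinDense_univ : IsJoinDense (Set.univ : Set α) := fun a ↦
  ⟨{a}, Set.subset_univ _, isLUB_singleton⟩

theorem IsMeetDense.le_of_forall_le (hs : IsMeetDense s) (h : ∀ c ∈ s, b ≤ c → a ≤ c) :
    a ≤ b := by
  obtain ⟨S, hS, hb⟩ := hs b
  exact hb.2 fun c hc ↦ h c (hS hc) (hb.1 hc)

theorem IsJoinDense.le_of_forall_le (hs : IsJoinDense s) (h : ∀ c ∈ s, c ≤ a → c ≤ b) :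
    a ≤ b := by
  obtain ⟨S, hS, ha⟩ := hs a
  exact ha.2 fun c hc ↦ h c (hS hc) (ha.1 hc)

end Density

section Pairs

variable {L : Type*} [Lattice L] {P : Set (L × L)} {A : Set P} {S : Set L} {a b k : L} {x : P}

theorem mem_cl_ltP_iff :
    x ∈ cl (ltP P) A ↔ ∀ p : P, (∀ q ∈ A, q.1.1 ≤ p.1.2) → x.1.1 ≤ p.1.2 := by
  refine forall_congr' fun p ↦ ?_
  rw [← not_imp_not]
  simp only [ltP, not_exists, not_and', not_not]

theorem cl_ltP_eq_emb (hP : IsMeetDense (Prod.snd '' P))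
    (ha : IsLUB ((fun p : P ↦ p.1.1) '' A) a) : cl (ltP P) A = emb P a := by
  ext x
  rw [mem_cl_ltP_iff]
  constructor
  · intro hx
    refine hP.le_of_forall_le ?_
    rintro _ ⟨p, hp, rfl⟩ hap
    exact hx ⟨p, hp⟩ fun q hq ↦ (ha.1 ⟨q, hq, rfl⟩).trans hap
  · intro hxa p hp
    exact le_trans hxa (ha.2 (Set.forall_mem_image.2 hp))

theorem cl_ltP_singleton (hP : IsMeetDense (Prod.snd '' P)) (p : P) :
    cl (ltP P) {p} = emb P p.1.1 :=
  cl_ltP_eq_emb hP (by simp only [Set.image_singleton, isLUB_singleton])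

theorem exists_emb_eq_of_cl_ltP_eq (hP : IsMeetDense (Prod.snd '' P))
    (hL : ∀ S : Set L, ∃ a : L, IsLUB S a) (hA : cl (ltP P) A = A) :
    ∃ a : L, emb P a = A := by
  obtain ⟨a, ha⟩ := hL ((fun p : P ↦ p.1.1) '' A)
  exact ⟨a, (cl_ltP_eq_emb hP ha).symm.trans hA⟩

theorem emb_eq_biInter_of_isGLB (ha : IsGLB S a) : emb P a = ⋂ s ∈ S, emb P s := by
  ext x
  simp only [Set.mem_iInter₂]
  exact le_isGLB_iff ha

theorem le_iff_forall_mem_emb (hP : IsJoinDense (Prod.fst '' P)) :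
    a ≤ b ↔ ∀ q ∈ emb P a, q.1.1 ≤ b := by
  refine ⟨fun hab q hq ↦ le_trans hq hab, fun h ↦ hP.le_of_forall_le ?_⟩
  rintro _ ⟨q, hq, rfl⟩ hqa
  exact h ⟨q, hq⟩ hqa

theorem emb_injective (hP : IsJoinDense (Prod.fst '' P)) : Function.Injective (emb P) :=
  fun _ _ h ↦ le_antisymm ((le_iff_forall_mem_emb hP).2 fun _ hq ↦ h.subset hq)
    ((le_iff_forall_mem_emb hP).2 fun _ hq ↦ h.superset hq)

theorem isLUB_fst_image_biUnion_emb (hP : IsJoinDense (Prod.fst '' P)) (ha : IsLUB S a) :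
    IsLUB ((fun p : P ↦ p.1.1) '' ⋃ s ∈ S, emb P s) a := by
  constructor
  · rintro _ ⟨p, hp, rfl⟩
    obtain ⟨s, hs, hps⟩ := Set.mem_iUnion₂.1 hp
    exact le_trans hps (ha.1 hs)
  · exact fun u hu ↦ ha.2 fun s hs ↦ (le_iff_forall_mem_emb hP).2 fun q hq ↦
      hu ⟨q, Set.mem_biUnion hs hq, rfl⟩

theorem cl_ltP_biUnion_emb (hfst : IsJoinDense (Prod.fst '' P))
    (hsnd : IsMeetDense (Prod.snd '' P)) (ha : IsLUB S a) :
    cl (ltP P) (⋃ s ∈ S, emb P s) = emb P a :=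
  cl_ltP_eq_emb hsnd (isLUB_fst_image_biUnion_emb hfst ha)

theorem cl_ltP_emb (hfst : IsJoinDense (Prod.fst '' P)) (hsnd : IsMeetDense (Prod.snd '' P))
    (a : L) : cl (ltP P) (emb P a) = emb P a := by
  simpa only [Set.biUnion_singleton] using
    cl_ltP_biUnion_emb hfst hsnd (isLUB_singleton (a := a))

theorem mem_negSetF_ltP_emb_iff (hP : IsJoinDense (Prod.fst '' P)) :
    x ∈ negSetF (ltP P) (emb P k) (emb P a) ↔
      ∀ p : P, p.1.1 ≤ a → k ≤ p.1.2 → x.1.1 ≤ p.1.2 := by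
  have exists_iff (p : P) : (∃ q, ltP P p q ∧ q ∈ emb P k) ↔ ¬ k ≤ p.1.2 := by
    rw [le_iff_forall_mem_emb hP (a := k)]
    simp only [ltP, not_forall, exists_prop, and_comm]
  refine forall_congr' fun p ↦ ?_
  rw [exists_iff, imp.swap]
  exact imp_congr_right fun _ ↦ not_imp_not

end Pairs

section Antitone

variable {L : Type*} [Lattice L] [BoundedOrder L] {neg : L → L} {Λ : Set L}

theorem mk_neg_mem_Pant (a : L) : (a, neg a) ∈ Pant neg Λ :=
  Or.inl ⟨a, rfl⟩

theorem isJoinDense_fst_image_Pant : IsJoinDense (Prod.fst '' Pant neg Λ) := by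
  have fst_image : Prod.fst '' Pant neg Λ = Set.univ :=
    Set.eq_univ_of_forall fun a ↦ ⟨_, mk_neg_mem_Pant a, rfl⟩
  exact fst_image ▸ isJoinDense_univ

theorem isMeetDense_snd_image_Pant (hΛ : IsMeetDense Λ) :
    IsMeetDense (Prod.snd '' Pant neg Λ) :=
  hΛ.mono fun b hb ↦ ⟨(⊤, b), Or.inr ⟨b, hb, rfl⟩, rfl⟩

theorem Fant_eq_emb (hΛ : IsMeetDense Λ) : Fant neg Λ = emb (Pant neg Λ) (neg ⊤) := by
  have generator : {p : Pant neg Λ | p.1 = (neg ⊤, neg (neg ⊤))} =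
      {⟨(neg ⊤, neg (neg ⊤)), mk_neg_mem_Pant (neg ⊤)⟩} := by
    ext p
    rw [Set.mem_singleton_iff, Subtype.ext_iff]
    rfl
  rw [Fant, generator, cl_ltP_singleton (isMeetDense_snd_image_Pant hΛ)]

theorem neg_le_snd_of_mem_Pant (hneg : Antitone neg) {p : L × L} (hp : p ∈ Pant neg Λ) {a : L}
    (hpa : p.1 ≤ a) (htop : neg ⊤ ≤ p.2) : neg a ≤ p.2 := by
  rcases hp with ⟨c, rfl⟩ | ⟨b, -, rfl⟩
  · exact hneg hpa
  · rwa [top_le_iff.1 hpa]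

theorem emb_neg (hΛ : IsMeetDense Λ) (hneg : Antitone neg) (a : L) :
    emb (Pant neg Λ) (neg a) =
      negSetF (ltP (Pant neg Λ)) (Fant neg Λ) (emb (Pant neg Λ) a) := by
  ext x
  rw [Fant_eq_emb hΛ, mem_negSetF_ltP_emb_iff isJoinDense_fst_image_Pant]
  exact ⟨fun hx p hpa htop ↦ le_trans hx (neg_le_snd_of_mem_Pant hneg p.2 hpa htop),
    fun h ↦ h ⟨_, mk_neg_mem_Pant a⟩ le_rfl (hneg le_top)⟩

end Antitone

/-- Representation of a bounded lattice with an antitone unary operation `¬`: the map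
`f(a) = {(x,y) ∈ P : x ≤ a}` is a complete embedding of `(L,¬)` into
`(𝔏(P,◁), ¬_{◁,F})` (injective, lands in fixpoints, preserves all existing meets and
joins, and sends `¬a` to `¬_{◁,F} f(a)`), which is an isomorphism (surjective onto the
fixpoints) if `L` is complete. -/
theorem stmt_14 {L : Type*} [Lattice L] [BoundedOrder L] (Λ : Set L) (neg : L → L)
    (hΛ : ∀ a : L, ∃ S : Set L, S ⊆ Λ ∧ IsGLB S a)
    (hanti : ∀ a b : L, a ≤ b → neg b ≤ neg a) :
    Function.Injective (emb (Pant neg Λ)) ∧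
    (∀ a : L, cl (ltP (Pant neg Λ)) (emb (Pant neg Λ) a) = emb (Pant neg Λ) a) ∧
    (∀ (S : Set L) (a : L), IsGLB S a → emb (Pant neg Λ) a = ⋂ s ∈ S, emb (Pant neg Λ) s) ∧
    (∀ (S : Set L) (a : L), IsLUB S a →
      emb (Pant neg Λ) a = cl (ltP (Pant neg Λ)) (⋃ s ∈ S, emb (Pant neg Λ) s)) ∧
    (∀ a : L, emb (Pant neg Λ) (neg a) =
      negSetF (ltP (Pant neg Λ)) (Fant neg Λ) (emb (Pant neg Λ) a)) ∧
    ((∀ S : Set L, ∃ a : L, IsLUB S a) →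
      ∀ A : Set ↥(Pant neg Λ), cl (ltP (Pant neg Λ)) A = A →
        ∃ a : L, emb (Pant neg Λ) a = A) := by
  have hfst : IsJoinDense (Prod.fst '' Pant neg Λ) := isJoinDense_fst_image_Pant
  have hsnd : IsMeetDense (Prod.snd '' Pant neg Λ) := isMeetDense_snd_image_Pant hΛ
  exact ⟨emb_injective hfst,
    cl_ltP_emb hfst hsnd,
    fun _ _ ↦ emb_eq_biInter_of_isGLB,
    fun _ _ ha ↦ (cl_ltP_biUnion_emb hfst hsnd ha).symm,
    emb_neg hΛ hanti,
    fun hL _ ↦ exists_emb_eq_of_cl_ltP_eq hsnd hL⟩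
end

section
/- If ¬ is a weak pseudocomplementation on a bounded lattice L, then the relation ◁ of the filter-ideal frame FI(L,¬) is strongly pseudosymmetric: for all states x and all y with y ◁ x, there is a z with z ◁ y such that z pre-refines x and x pre-refines z. -/
/-- `F` is a (possibly improper) filter in the lattice `L`. -/
def IsLatFilter {L : Type*} [Lattice L] (F : Set L) : Prop :=
  F.Nonempty ∧ (∀ a ∈ F, ∀ b : L, a ≤ b → b ∈ F) ∧ (∀ a ∈ F, ∀ b ∈ F, a ⊓ b ∈ F)

/-- `I` is an ideal in the lattice `L`. -/
def IsLatIdeal {L : Type*} [Lattice L] (I : Set L) : Prop :=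
  I.Nonempty ∧ (∀ a ∈ I, ∀ b : L, b ≤ a → b ∈ I) ∧ (∀ a ∈ I, ∀ b ∈ I, a ⊔ b ∈ I)

/-- The set of states of the filter-ideal frame `FI(L,¬)`: pairs `(F,I)` of a filter `F`
and an ideal `I` with `F ∩ I = ∅` and `{¬a : a ∈ F} ⊆ I`. -/
def FIstates {L : Type*} [Lattice L] (neg : L → L) : Set (Set L × Set L) :=
  {p | IsLatFilter p.1 ∧ IsLatIdeal p.2 ∧ p.1 ∩ p.2 = ∅ ∧ ∀ a ∈ p.1, neg a ∈ p.2}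

/-- The relation of `FI(L,¬)`: `(F,I) ◁ (F',I')` iff `I ∩ F' = ∅`. -/
def ltFI {L : Type*} [Lattice L] (neg : L → L) :
    ↥(FIstates neg) → ↥(FIstates neg) → Prop :=
  fun p q => p.1.2 ∩ q.1.1 = ∅

/-- `x` pre-refines `y`: everything open to `x` is open to `y`. -/
def preRefines {X : Type*} (lt : X → X → Prop) (x y : X) : Prop :=
  ∀ z, lt z x → lt z y

/-!
Keep the filter of `x = (F, I)` and shrink `I` to the smallest ideal `{c | ∃ a ∈ F, c ≤ ¬a}` that
can accompany `F`. Whether `w ◁ x` holds depends only on the filter of `x`, so the new state `z`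
and `x` pre-refine each other. If `c ≤ ¬a` with `a ∈ F` and `c` in the filter of `y`, then
`a ≤ ¬c`, which puts `a` in the ideal of `y` and contradicts `y ◁ x`; hence `z ◁ y`.
-/

section NegIdeal

variable {L : Type*} {neg : L → L} {F G I : Set L}

/-- The lower set generated by the negations of the elements of `F`. When `F` is a filter and `neg`
is antitone, it is the least ideal containing them. -/
def negIdeal [Preorder L] (neg : L → L) (F : Set L) : Set L :=
  lowerClosure (neg '' F)

theorem mem_negIdeal [Preorder L] {c : L} : c ∈ negIdeal neg F ↔ ∃ a ∈ F, c ≤ neg a := by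
  simp only [negIdeal, SetLike.mem_coe, mem_lowerClosure, Set.exists_mem_image]

theorem neg_mem_negIdeal [Preorder L] {a : L} (ha : a ∈ F) : neg a ∈ negIdeal neg F :=
  mem_negIdeal.2 ⟨a, ha, le_rfl⟩

theorem negIdeal_subset [Preorder L] (hI : IsLowerSet I) (hneg : Set.MapsTo neg F I) :
    negIdeal neg F ⊆ I :=
  lowerClosure_min hneg.image_subset hI

theorem disjoint_negIdeal_symm [Preorder L] (hanti : Antitone neg)
    (hdni : ∀ a, a ≤ neg (neg a)) (h : Disjoint (negIdeal neg G) F) :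
    Disjoint (negIdeal neg F) G := by
  rw [Set.disjoint_left] at h ⊢
  intro c hcF hcG
  obtain ⟨a, ha, hca⟩ := mem_negIdeal.1 hcF
  have hac : a ≤ neg c := (hdni a).trans (hanti hca)
  exact h (mem_negIdeal.2 ⟨c, hcG, hac⟩) ha

theorem isLatIdeal_negIdeal [Lattice L] (hanti : Antitone neg) (hF : IsLatFilter F) :
    IsLatIdeal (negIdeal neg F) := by
  obtain ⟨hne, -, hinf⟩ := hF
  refine ⟨(hne.image neg).mono subset_lowerClosure, ?_, ?_⟩
  · exact fun a ha b hba => (lowerClosure (neg '' F)).lower hba ha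
  · intro c hc d hd
    obtain ⟨a, ha, hca⟩ := mem_negIdeal.1 hc
    obtain ⟨b, hb, hdb⟩ := mem_negIdeal.1 hd
    exact mem_negIdeal.2 ⟨a ⊓ b, hinf a ha b hb,
      (sup_le_sup hca hdb).trans (hanti.le_map_inf a b)⟩

end NegIdeal

section FIFrame

variable {L : Type*} [Lattice L] {neg : L → L}

theorem IsLatIdeal.isLowerSet {I : Set L} (hI : IsLatIdeal I) : IsLowerSet I :=
  fun a b hba ha => hI.2.1 a ha b hba

theorem negIdeal_subset_of_mem_FIstates {p : Set L × Set L} (hp : p ∈ FIstates neg) :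
    negIdeal neg p.1 ⊆ p.2 :=
  negIdeal_subset hp.2.1.isLowerSet hp.2.2.2

theorem mk_negIdeal_mem_FIstates (hanti : Antitone neg) {p : Set L × Set L}
    (hp : p ∈ FIstates neg) : (p.1, negIdeal neg p.1) ∈ FIstates neg :=
  ⟨hp.1, isLatIdeal_negIdeal hanti hp.1,
    Set.subset_eq_empty (Set.inter_subset_inter_right _ (negIdeal_subset_of_mem_FIstates hp))
      hp.2.2.1,
    fun _ => neg_mem_negIdeal⟩

theorem ltFI_iff_disjoint {x y : FIstates neg} : ltFI neg x y ↔ Disjoint x.1.2 y.1.1 :=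
  Set.disjoint_iff_inter_eq_empty.symm

theorem preRefines_ltFI_of_subset {x y : FIstates neg} (h : y.1.1 ⊆ x.1.1) :
    preRefines (ltFI neg) x y :=
  fun _ hz => ltFI_iff_disjoint.2 ((ltFI_iff_disjoint.1 hz).mono_right h)

end FIFrame

theorem stmt_16_general {L : Type*} [Lattice L] {neg : L → L} (hanti : Antitone neg)
    (hdni : ∀ a, a ≤ neg (neg a)) (x y : FIstates neg) (hyx : ltFI neg y x) :
    ∃ z, ltFI neg z y ∧ preRefines (ltFI neg) z x ∧ preRefines (ltFI neg) x z := by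
  let z : FIstates neg := ⟨(x.1.1, negIdeal neg x.1.1), mk_negIdeal_mem_FIstates hanti x.2⟩
  have hyx' : Disjoint (negIdeal neg y.1.1) x.1.1 :=
    (ltFI_iff_disjoint.1 hyx).mono_left (negIdeal_subset_of_mem_FIstates y.2)
  have hzy : ltFI neg z y := ltFI_iff_disjoint.2 (disjoint_negIdeal_symm hanti hdni hyx')
  exact ⟨z, hzy, preRefines_ltFI_of_subset subset_rfl, preRefines_ltFI_of_subset subset_rfl⟩

/-- If `¬` is a weak pseudocomplementation on a bounded lattice `L`, then the relation
`◁` of `FI(L,¬)` is strongly pseudosymmetric. -/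
theorem stmt_16 {L : Type*} [Lattice L] [BoundedOrder L] (neg : L → L)
    (hanti : ∀ a b : L, a ≤ b → neg b ≤ neg a)
    (hsemi : ∀ a : L, a ⊓ neg a = ⊥)
    (hdni : ∀ a : L, a ≤ neg (neg a)) :
    ∀ x y : ↥(FIstates neg), ltFI neg y x →
      ∃ z, ltFI neg z y ∧ preRefines (ltFI neg) z x ∧ preRefines (ltFI neg) x z :=
  stmt_16_general (fun a b => hanti a b) hdni
end

section
/- Let g : 𝓛 → 𝓛 be the translation defined by g(p) = ¬¬p for propositional variables p, g(¬φ) = ¬g(φ), g(φ∧ψ) = g(φ) ∧ g(ψ), and g(φ∨ψ) = ¬(¬g(φ) ∧ ¬g(ψ)). Then for all formulas φ, ψ of 𝓛: φ ⊢_O ψ if and only if g(φ) ⊢_F g(ψ). -/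
/-- Formulas of the propositional language `𝓛` over a set `P` of propositional variables. -/
inductive Form (P : Type) : Type
  | var : P → Form P
  | neg : Form P → Form P
  | conj : Form P → Form P → Form P
  | disj : Form P → Form P → Form P

/-- `r` is an intro-elim logic. -/
def IsIntroElim {P : Type} (r : Form P → Form P → Prop) : Prop :=
  (∀ φ, r φ φ) ∧
  (∀ φ ψ, r (Form.conj φ ψ) φ) ∧
  (∀ φ ψ, r (Form.conj φ ψ) ψ) ∧
  (∀ φ ψ, r φ (Form.disj φ ψ)) ∧
  (∀ φ ψ, r φ (Form.disj ψ φ)) ∧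
  (∀ φ, r φ (Form.neg (Form.neg φ))) ∧
  (∀ φ ψ, r (Form.conj φ (Form.neg φ)) ψ) ∧
  (∀ φ ψ χ, r φ ψ → r ψ χ → r φ χ) ∧
  (∀ φ ψ χ, r φ ψ → r φ χ → r φ (Form.conj ψ χ)) ∧
  (∀ φ ψ χ, r φ χ → r ψ χ → r (Form.disj φ ψ) χ) ∧
  (∀ φ ψ, r φ ψ → r (Form.neg ψ) (Form.neg φ))

/-- The fundamental logic `⊢_F`: the smallest intro-elim logic. -/
def FProv {P : Type} (φ ψ : Form P) : Prop :=
  ∀ r : Form P → Form P → Prop, IsIntroElim r → r φ ψ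

/-- Orthologic `⊢_O`: the smallest intro-elim logic containing `¬¬φ ⊢ φ` for all `φ`. -/
def OProv {P : Type} (φ ψ : Form P) : Prop :=
  ∀ r : Form P → Form P → Prop,
    IsIntroElim r → (∀ χ, r (Form.neg (Form.neg χ)) χ) → r φ ψ

/-- The negative translation `g`. -/
def gTrans {P : Type} : Form P → Form P
  | Form.var p => Form.neg (Form.neg (Form.var p))
  | Form.neg φ => Form.neg (gTrans φ)
  | Form.conj φ ψ => Form.conj (gTrans φ) (gTrans ψ)
  | Form.disj φ ψ =>
      Form.neg (Form.conj (Form.neg (gTrans φ)) (Form.neg (gTrans ψ)))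

/-!
The image of `g` consists of formulas `χ` with `¬¬χ ⊢ χ` in every intro-elim logic, because
negations have this property and conjunction preserves it. For such `χ` the formula `¬(¬φ ∧ ¬ψ)`
satisfies the elimination rule of a disjunction, so pulling an intro-elim logic back along `g` gives
an intro-elim logic with double negation elimination; this handles the forward direction.
Conversely, with double negation elimination `¬(¬φ ∧ ¬ψ)` and `φ ∨ ψ` are interderivable, hence so
are `g(φ)` and `φ`.
-/

/-- The De Morgan disjunction `¬(¬φ ∧ ¬ψ)`, which replaces `φ ∨ ψ` in the translation `g`. -/
def Form.deMorganDisj {P : Type} (φ ψ : Form P) : Form P :=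
  .neg (.conj (.neg φ) (.neg ψ))

/-- `χ` is stable in the logic `r` if it satisfies double negation elimination, `¬¬χ ⊢ χ`. -/
def IsStable {P : Type} (r : Form P → Form P → Prop) (χ : Form P) : Prop :=
  r (.neg (.neg χ)) χ

namespace IsIntroElim

variable {P : Type} {r : Form P → Form P → Prop} {φ ψ χ φ' ψ' : Form P}

theorem refl (h : IsIntroElim r) (φ : Form P) : r φ φ :=
  h.1 φ

theorem conj_left (h : IsIntroElim r) : r (.conj φ ψ) φ :=
  h.2.1 φ ψ

theorem conj_right (h : IsIntroElim r) : r (.conj φ ψ) ψ :=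
  h.2.2.1 φ ψ

theorem disj_inl (h : IsIntroElim r) : r φ (.disj φ ψ) :=
  h.2.2.2.1 φ ψ

theorem disj_inr (h : IsIntroElim r) : r ψ (.disj φ ψ) :=
  h.2.2.2.2.1 ψ φ

theorem neg_neg_intro (h : IsIntroElim r) : r φ (.neg (.neg φ)) :=
  h.2.2.2.2.2.1 φ

theorem explosion (h : IsIntroElim r) : r (.conj φ (.neg φ)) ψ :=
  h.2.2.2.2.2.2.1 φ ψ

theorem trans (h : IsIntroElim r) (hφψ : r φ ψ) (hψχ : r ψ χ) : r φ χ :=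
  h.2.2.2.2.2.2.2.1 φ ψ χ hφψ hψχ

theorem conj_intro (h : IsIntroElim r) (hφ : r χ φ) (hψ : r χ ψ) : r χ (.conj φ ψ) :=
  h.2.2.2.2.2.2.2.2.1 χ φ ψ hφ hψ

theorem disj_elim (h : IsIntroElim r) (hφ : r φ χ) (hψ : r ψ χ) : r (.disj φ ψ) χ :=
  h.2.2.2.2.2.2.2.2.2.1 φ ψ χ hφ hψ

theorem contrapose (h : IsIntroElim r) (hφψ : r φ ψ) : r (.neg ψ) (.neg φ) :=
  h.2.2.2.2.2.2.2.2.2.2 φ ψ hφψ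

theorem conj_mono (h : IsIntroElim r) (hφ : r φ φ') (hψ : r ψ ψ') :
    r (.conj φ ψ) (.conj φ' ψ') :=
  h.conj_intro (h.trans h.conj_left hφ) (h.trans h.conj_right hψ)

theorem disj_mono (h : IsIntroElim r) (hφ : r φ φ') (hψ : r ψ ψ') :
    r (.disj φ ψ) (.disj φ' ψ') :=
  h.disj_elim (h.trans hφ h.disj_inl) (h.trans hψ h.disj_inr)

theorem isStable_neg (h : IsIntroElim r) (φ : Form P) : IsStable r (.neg φ) :=
  h.contrapose h.neg_neg_intro

theorem isStable_conj (h : IsIntroElim r) (hφ : IsStable r φ) (hψ : IsStable r ψ) :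
    IsStable r (.conj φ ψ) :=
  h.conj_intro
    (h.trans (h.contrapose (h.contrapose h.conj_left)) hφ)
    (h.trans (h.contrapose (h.contrapose h.conj_right)) hψ)

theorem deMorganDisj_inl (h : IsIntroElim r) : r φ (φ.deMorganDisj ψ) :=
  h.trans h.neg_neg_intro (h.contrapose h.conj_left)

theorem deMorganDisj_inr (h : IsIntroElim r) : r ψ (φ.deMorganDisj ψ) :=
  h.trans h.neg_neg_intro (h.contrapose h.conj_right)

theorem deMorganDisj_elim (h : IsIntroElim r) (hχ : IsStable r χ) (hφ : r φ χ) (hψ : r ψ χ) :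
    r (φ.deMorganDisj ψ) χ :=
  have hneg : r (.neg χ) (.conj (.neg φ) (.neg ψ)) :=
    h.conj_intro (h.contrapose hφ) (h.contrapose hψ)
  h.trans (h.contrapose hneg) hχ

theorem antisymmRel_disj_deMorganDisj (h : IsIntroElim r) (hs : IsStable r (.disj φ ψ)) :
    AntisymmRel r (.disj φ ψ) (φ.deMorganDisj ψ) :=
  ⟨h.disj_elim h.deMorganDisj_inl h.deMorganDisj_inr,
    h.deMorganDisj_elim hs h.disj_inl h.disj_inr⟩

theorem isStable_gTrans (h : IsIntroElim r) (φ : Form P) : IsStable r (gTrans φ) := by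
  induction φ with
  | var p => exact h.isStable_neg _
  | neg φ _ => exact h.isStable_neg _
  | conj φ ψ ihφ ihψ => exact h.isStable_conj ihφ ihψ
  | disj φ ψ _ _ => exact h.isStable_neg _

theorem onFun_gTrans (h : IsIntroElim r) : IsIntroElim (Function.onFun r gTrans) :=
  ⟨fun _ => h.refl _,
    fun _ _ => h.conj_left,
    fun _ _ => h.conj_right,
    fun _ _ => h.deMorganDisj_inl,
    fun _ _ => h.deMorganDisj_inr,
    fun _ => h.neg_neg_intro,
    fun _ _ => h.explosion,
    fun _ _ _ => h.trans,
    fun _ _ _ => h.conj_intro,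
    fun _ _ χ => h.deMorganDisj_elim (h.isStable_gTrans χ),
    fun _ _ => h.contrapose⟩

theorem antisymmRel_gTrans (h : IsIntroElim r) (hs : ∀ χ, IsStable r χ) (φ : Form P) :
    AntisymmRel r φ (gTrans φ) := by
  induction φ with
  | var p => exact ⟨h.neg_neg_intro, hs _⟩
  | neg φ ih => exact ⟨h.contrapose ih.2, h.contrapose ih.1⟩
  | conj φ ψ ihφ ihψ => exact ⟨h.conj_mono ihφ.1 ihψ.1, h.conj_mono ihφ.2 ihψ.2⟩
  | disj φ ψ ihφ ihψ =>
    have hdm : AntisymmRel r (.disj (gTrans φ) (gTrans ψ)) (gTrans (.disj φ ψ)) :=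
      h.antisymmRel_disj_deMorganDisj (hs _)
    exact ⟨h.trans (h.disj_mono ihφ.1 ihψ.1) hdm.1, h.trans hdm.2 (h.disj_mono ihφ.2 ihψ.2)⟩

theorem gTrans_iff (h : IsIntroElim r) (hs : ∀ χ, IsStable r χ) :
    r (gTrans φ) (gTrans ψ) ↔ r φ ψ :=
  have hφ := h.antisymmRel_gTrans hs φ
  have hψ := h.antisymmRel_gTrans hs ψ
  ⟨fun hg => h.trans hφ.1 (h.trans hg hψ.2), fun hφψ => h.trans hφ.2 (h.trans hφψ hψ.1)⟩

end IsIntroElim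

/-- The translation `g` is a full and faithful embedding of orthologic into the
fundamental logic. -/
theorem stmt_19 {P : Type} [Nonempty P] (φ ψ : Form P) :
    OProv φ ψ ↔ FProv (gTrans φ) (gTrans ψ) := by
  constructor
  · intro hO r hr
    exact hO (Function.onFun r gTrans) hr.onFun_gTrans hr.isStable_gTrans
  · intro hF r hr hdn
    exact (hr.gTrans_iff hdn).1 (hF r hr)
end
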